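/- Let x₀ < x₁ be real numbers and let the functions T, R_l, R_r, φ₁, φ₂ be as follows: T, R_l, R_r : ℝ → ℂ satisfy T(−k) = conj(T(k)), R_l(−k) = conj(R_l(k)), R_r(−k) = conj(R_r(k)); for every k ∈ ℝ the 2×2 matrix [[T(k), R_l(k)], [R_r(k), T(k)]] is unitary; φ₁(x,k) = R_l(k)e^{-ikx} + e^{ikx} for x ≤ x₀, φ₁(x,k) = T(k)e^{ikx} for x ≥ x₁, φ₂(x,k) = T(k)e^{-ikx} for x ≤ x₀, φ₂(x,k) = R_r(k)e^{ikx} + e^{-ikx} for x ≥ x₁. Suppose moreover that T admits an extension T̃ : {ω ∈ ℂ : Im ω ≥ 0} → ℂ analytic on {Im ω > 0}, with |T̃(ω)| ≤ 1 everywhere and lim_{b→0+} T̃(k+ib) = T(k) for almost all k ∈ ℝ. Let ψ₀ be a Schwartz function supported in (−∞, x₀], t ∈ ℝ, and let u(x) := (2π)^{-1/2} ∫_ℝ (1/2)[(k,ψ₀)_1 φ₁(x,k) + (k,ψ₀)_2 φ₂(x,k)] e^{-itk²} dk with (k,ψ₀)_i := (2π)^{-1/2} ∫_ℝ conj(φ_i(y,k))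 ψ₀(y) dy. Then for every a ≥ x₁: ∫_{[a,∞)} |u(x)|² dx ≤ ∫_{[a,∞)} |(e^{-itH₀}ψ₀)(x)|² dx, where e^{-itH₀}ψ₀ := F*(k ↦ e^{-itk²}(Fψ₀)(k)). That is, the probability that the tunneled particle is located in [a,∞) at time t never exceeds that of the free particle. -/

import Mathlib

open Complex Filter Set MeasureTheory

noncomputable section

/-- `gt` is an extension of `g : ℝ → ℂ` to the closed upper half-plane which is analytic on the
open upper half-plane, bounded by one there, and has non-tangential boundary values `g` a.e. -/
structure HardyExt (g : ℝ → ℂ) (gt : ℂ → ℂ) : Prop where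
  agree : ∀ a : ℝ, gt (a : ℂ) = g a
  analytic : DifferentiableOn ℂ gt {ω : ℂ | 0 < ω.im}
  bounded : ∀ ω : ℂ, 0 ≤ ω.im → ‖gt ω‖ ≤ 1
  boundary : ∀ᵐ a : ℝ ∂volume,
    Tendsto (fun b : ℝ => gt ((a : ℂ) + b * Complex.I)) (nhdsWithin 0 (Ioi 0)) (nhds (g a))

/-! On `x ≥ x₁`, unitarity of the scattering matrix makes the reflected contributions to `u` cancel,
and the conjugation symmetry of `T` combines the two remaining ones: `u` is the free wave with its
spectrum multiplied by `T`. The multiplier `T` extends to a bounded analytic function on the upper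
half-plane, so by Cauchy's theorem its convolution kernel is carried by `(-∞, 0]`, and the values of
`u` on `[a, ∞)` depend only on those of the free wave on `[a, ∞)`. Cutting the free wave off to
`[a, ∞)` and using `|T| ≤ 1` with Plancherel's theorem gives the estimate. To have an integrable
symbol, `T` is first multiplied by `(1 - iεk)⁻²`; the factor is removed by Fatou's lemma. -/

open scoped ComplexConjugate FourierTransform Real Topology

/-- At least quadratic decay at infinity, uniformly over the closed upper half-plane. -/
def HasQuadraticDecay {E : Type*} [Norm E] (F : ℂ → E) : Prop :=
  ∃ C : ℝ, ∀ ω : ℂ, 0 ≤ ω.im → ‖F ω‖ ≤ C * (1 + ‖ω‖ ^ 2)⁻¹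

namespace HasQuadraticDecay

variable {E : Type*} [NormedAddCommGroup E] {F : ℂ → E}

lemma exists_norm_line_le (hF : HasQuadraticDecay F) :
    ∃ C : ℝ, ∀ x b : ℝ, 0 ≤ b → ‖F (x + b * I)‖ ≤ C * (1 + x ^ 2)⁻¹ := by
  obtain ⟨C, hC⟩ := hF
  have hC0 : 0 ≤ C := by simpa using (norm_nonneg _).trans (hC 0 le_rfl)
  refine ⟨C, fun x b hb ↦ (hC _ (by simpa using hb)).trans ?_⟩
  have hx : x ^ 2 ≤ ‖(x + b * I : ℂ)‖ ^ 2 := by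
    rw [← normSq_eq_norm_sq, normSq_add_mul_I]
    exact le_add_of_nonneg_right (sq_nonneg b)
  gcongr

lemma exists_norm_le_of_le_norm (hF : HasQuadraticDecay F) :
    ∃ C : ℝ, ∀ R : ℝ, 0 < R → ∀ ω : ℂ, 0 ≤ ω.im → R ≤ ‖ω‖ → ‖F ω‖ ≤ C * (R ^ 2)⁻¹ := by
  obtain ⟨C, hC⟩ := hF
  have hC0 : 0 ≤ C := by simpa using (norm_nonneg _).trans (hC 0 le_rfl)
  refine ⟨C, fun R hR ω hω hRω ↦ (hC ω hω).trans ?_⟩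
  have hsq : R ^ 2 ≤ 1 + ‖ω‖ ^ 2 := by nlinarith
  gcongr

variable [NormedSpace ℂ E]

lemma integrable_line (hF : HasQuadraticDecay F) (hd : DifferentiableOn ℂ F {ω : ℂ | 0 < ω.im})
    {b : ℝ} (hb : 0 < b) : Integrable fun x : ℝ ↦ F (x + b * I) := by
  obtain ⟨C, hC⟩ := hF.exists_norm_line_le
  have hcont : Continuous fun x : ℝ ↦ F (x + b * I) :=
    hd.continuousOn.comp_continuous (by fun_prop) fun x ↦ by simpa using hb
  exact (integrable_inv_one_add_sq.const_mul C).mono' hcont.aestronglyMeasurable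
    (.of_forall fun x ↦ hC x b hb.le)

/-- Cauchy's theorem on `[-R, R] × [b, b + R]`: the other three sides have length `O(R)`, and the
integrand is `O(R⁻²)` on them. -/
lemma exists_norm_intervalIntegral_line_le [CompleteSpace E] (hF : HasQuadraticDecay F)
    (hd : DifferentiableOn ℂ F {ω : ℂ | 0 < ω.im}) {b : ℝ} (hb : 0 < b) :
    ∃ C : ℝ, ∀ R : ℝ, 0 < R → ‖∫ x in (-R)..R, F (x + b * I)‖ ≤ C * R⁻¹ := by
  obtain ⟨C, hC⟩ := hF.exists_norm_le_of_le_norm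
  refine ⟨4 * C, fun R hR ↦ ?_⟩
  have hrect : (∫ x in (-R)..R, F (x + b * I)) - (∫ x in (-R)..R, F (x + (b + R : ℝ) * I)) +
      I • (∫ y in b..(b + R), F (R + y * I)) -
      I • (∫ y in b..(b + R), F ((-R : ℝ) + y * I)) = 0 := by
    refine integral_boundary_rect_eq_zero_of_differentiableOn F ⟨-R, b⟩ ⟨R, b + R⟩
      (hd.mono fun ω hω ↦ ?_)
    have him : ω.im ∈ uIcc b (b + R) := hω.2
    rw [uIcc_of_le (by linarith)] at him
    exact hb.trans_le him.1
  have htop : ‖∫ x in (-R)..R, F (x + (b + R : ℝ) * I)‖ ≤ C * (R ^ 2)⁻¹ * |R - -R| := by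
    refine intervalIntegral.norm_integral_le_of_norm_le_const fun x _ ↦ hC R hR _ ?_ ?_
    · simpa using by positivity
    · refine le_trans ?_ (abs_im_le_norm _)
      simpa using (le_abs_self R).trans (abs_le_abs_of_nonneg hR.le (by linarith))
  have hside (σ : ℝ) (hσ : |σ| = R) :
      ‖I • ∫ y in b..(b + R), F (σ + y * I)‖ ≤ C * (R ^ 2)⁻¹ * |b + R - b| := by
    rw [norm_smul, norm_I, one_mul]
    refine intervalIntegral.norm_integral_le_of_norm_le_const fun y hy ↦ hC R hR _ ?_ ?_
    · rw [uIoc_of_le (by linarith)] at hy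
      simpa using hb.le.trans hy.1.le
    · refine le_trans ?_ (abs_re_le_norm _)
      simp [hσ]
  calc ‖∫ x in (-R)..R, F (x + b * I)‖
      = ‖(∫ x in (-R)..R, F (x + (b + R : ℝ) * I)) - I • (∫ y in b..(b + R), F (R + y * I)) +
        I • (∫ y in b..(b + R), F ((-R : ℝ) + y * I))‖ := by
        congr 1
        rw [← sub_eq_zero, ← hrect]
        abel
    _ ≤ C * (R ^ 2)⁻¹ * |R - -R| + C * (R ^ 2)⁻¹ * |b + R - b| + C * (R ^ 2)⁻¹ * |b + R - b| :=
        norm_add_le_of_le (norm_sub_le_of_le htop (hside R (abs_of_pos hR)))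
          (hside (-R) (by rw [abs_neg, abs_of_pos hR]))
    _ = 4 * C * R⁻¹ := by
        rw [sub_neg_eq_add, add_sub_cancel_left, abs_of_pos hR, abs_of_pos (by positivity)]
        field_simp
        ring

lemma integral_line_eq_zero [CompleteSpace E] (hF : HasQuadraticDecay F)
    (hd : DifferentiableOn ℂ F {ω : ℂ | 0 < ω.im}) {b : ℝ} (hb : 0 < b) :
    ∫ x : ℝ, F (x + b * I) = 0 := by
  obtain ⟨C, hC⟩ := hF.exists_norm_intervalIntegral_line_le hd hb
  have hlim := intervalIntegral_tendsto_integral (hF.integrable_line hd hb)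
    tendsto_neg_atTop_atBot tendsto_id
  refine tendsto_nhds_unique hlim (squeeze_zero_norm' (a := fun R ↦ C * R⁻¹) ?_ ?_)
  · filter_upwards [eventually_gt_atTop 0] with R hR using hC R hR
  · simpa using tendsto_inv_atTop_zero.const_mul C

end HasQuadraticDecay

namespace HardyExt

variable {g g₁ g₂ : ℝ → ℂ} {gt gt₁ gt₂ : ℂ → ℂ}

lemma norm_le_one (h : HardyExt g gt) (k : ℝ) : ‖g k‖ ≤ 1 :=
  h.agree k ▸ h.bounded k (by simp)

lemma aestronglyMeasurable (h : HardyExt g gt) : AEStronglyMeasurable g := by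
  obtain ⟨b, -, hb, hblim⟩ := exists_seq_strictAnti_tendsto_nhdsWithin (0 : ℝ)
  refine aestronglyMeasurable_of_tendsto_ae atTop
    (f := fun n (k : ℝ) ↦ gt (k + b n * I)) (fun n ↦ ?_) ?_
  · have hcont : Continuous fun k : ℝ ↦ gt (k + b n * I) :=
      h.analytic.continuousOn.comp_continuous (by fun_prop) fun k ↦ by simpa using (hb n)
    exact hcont.aestronglyMeasurable
  · filter_upwards [h.boundary] with k hk using hk.comp hblim

lemma of_continuousOn (hd : DifferentiableOn ℂ gt {ω : ℂ | 0 < ω.im})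
    (hc : ContinuousOn gt {ω : ℂ | 0 ≤ ω.im}) (hb : ∀ ω : ℂ, 0 ≤ ω.im → ‖gt ω‖ ≤ 1) :
    HardyExt (fun k : ℝ ↦ gt k) gt where
  agree _ := rfl
  analytic := hd
  bounded := hb
  boundary := .of_forall fun k ↦ by
    have hline : Tendsto (fun b : ℝ ↦ (k : ℂ) + b * I) (𝓝[>] 0) (𝓝[{ω : ℂ | 0 ≤ ω.im}] k) := by
      refine tendsto_nhdsWithin_iff.mpr ⟨?_, ?_⟩
      · exact tendsto_nhdsWithin_of_tendsto_nhds (Continuous.tendsto' (by fun_prop) _ _ (by simp))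
      · filter_upwards [self_mem_nhdsWithin] with b hb
        simpa using le_of_lt hb
    exact (hc k (by simp)).tendsto.comp hline

lemma mul (h₁ : HardyExt g₁ gt₁) (h₂ : HardyExt g₂ gt₂) :
    HardyExt (fun k ↦ g₁ k * g₂ k) (fun ω ↦ gt₁ ω * gt₂ ω) where
  agree k := by rw [h₁.agree, h₂.agree]
  analytic := h₁.analytic.mul h₂.analytic
  bounded ω hω := by
    rw [norm_mul]
    exact mul_le_one₀ (h₁.bounded ω hω) (norm_nonneg _) (h₂.bounded ω hω)
  boundary := by
    filter_upwards [h₁.boundary, h₂.boundary] with k hk₁ hk₂ using hk₁.mul hk₂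

lemma comp_mul_left (h : HardyExt g gt) {r : ℝ} (hr : 0 < r) :
    HardyExt (fun k ↦ g (r * k)) (fun ω ↦ gt (r * ω)) where
  agree k := by rw [← ofReal_mul, h.agree]
  analytic := h.analytic.comp (by fun_prop) fun ω hω ↦ by simpa using mul_pos hr hω
  bounded ω hω := h.bounded _ (by simpa using mul_nonneg hr.le hω)
  boundary := by
    have hscale : Tendsto (fun b : ℝ ↦ r * b) (𝓝[>] 0) (𝓝[>] 0) := by
      refine tendsto_nhdsWithin_iff.mpr ⟨?_, ?_⟩
      · exact tendsto_nhdsWithin_of_tendsto_nhds (Continuous.tendsto' (by fun_prop) _ _ (by simp))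
      · filter_upwards [self_mem_nhdsWithin] with b hb using mul_pos hr hb
    have hqmp : Measure.QuasiMeasurePreserving (fun k : ℝ ↦ r * k) volume volume := by
      refine ⟨by fun_prop, ?_⟩
      rw [Real.map_volume_mul_left hr.ne']
      exact Measure.smul_absolutelyContinuous
    filter_upwards [hqmp.ae h.boundary] with k hk
    refine (hk.comp hscale).congr fun b ↦ ?_
    simp only [Function.comp_apply]
    push_cast
    ring_nf

lemma integrable_of_hasQuadraticDecay (h : HardyExt g gt) (hdecay : HasQuadraticDecay gt) :
    Integrable g := by
  obtain ⟨C, hC⟩ := hdecay.exists_norm_line_le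
  refine (integrable_inv_one_add_sq.const_mul C).mono' h.aestronglyMeasurable
    (.of_forall fun k ↦ ?_)
  simpa [h.agree] using hC k 0 le_rfl

lemma hasQuadraticDecay_mul (h : HardyExt g gt) {F : ℂ → ℂ} (hF : HasQuadraticDecay F) :
    HasQuadraticDecay fun ω ↦ gt ω * F ω := by
  obtain ⟨C, hC⟩ := hF
  refine ⟨C, fun ω hω ↦ ?_⟩
  calc ‖gt ω * F ω‖ ≤ ‖F ω‖ := by
        rw [norm_mul]
        exact mul_le_of_le_one_left (norm_nonneg _) (h.bounded ω hω)
    _ ≤ C * (1 + ‖ω‖ ^ 2)⁻¹ := hC ω hω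

lemma integral_eq_zero (h : HardyExt g gt) (hdecay : HasQuadraticDecay gt) :
    ∫ k, g k = 0 := by
  obtain ⟨C, hC⟩ := hdecay.exists_norm_line_le
  have hlim : Tendsto (fun b : ℝ ↦ ∫ k : ℝ, gt (k + b * I)) (𝓝[>] 0) (𝓝 (∫ k, g k)) := by
    refine tendsto_integral_filter_of_dominated_convergence (fun k ↦ C * (1 + k ^ 2)⁻¹) ?_ ?_
      (integrable_inv_one_add_sq.const_mul C) h.boundary
    · filter_upwards [self_mem_nhdsWithin] with b hb
      exact (hdecay.integrable_line h.analytic hb).aestronglyMeasurable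
    · filter_upwards [self_mem_nhdsWithin] with b hb
      exact .of_forall fun k ↦ hC k b (le_of_lt hb)
  refine tendsto_nhds_unique hlim (tendsto_const_nhds.congr' ?_)
  filter_upwards [self_mem_nhdsWithin] with b hb
  exact (hdecay.integral_line_eq_zero h.analytic hb).symm

lemma exp_mul_I {s : ℝ} (hs : 0 ≤ s) :
    HardyExt (fun k ↦ exp (I * k * s)) (fun ω ↦ exp (I * ω * s)) := by
  refine of_continuousOn (gt := fun ω ↦ exp (I * ω * s)) (by fun_prop) (by fun_prop) fun ω hω ↦ ?_
  rw [norm_exp, Real.exp_le_one_iff]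
  simpa using mul_nonneg hω hs

/-- The factor `exp (2πixω)` of the inversion integral is bounded in the upper half-plane precisely
when `0 ≤ x`. -/
lemma fourierInv_eq_zero (h : HardyExt g gt) (hdecay : HasQuadraticDecay gt) {x : ℝ} (hx : 0 ≤ x) :
    𝓕⁻ g x = 0 := by
  have hs : 0 ≤ 2 * π * x := by positivity
  have hzero :=
    ((exp_mul_I hs).mul h).integral_eq_zero ((exp_mul_I hs).hasQuadraticDecay_mul hdecay)
  rw [Real.fourierInv_eq', ← hzero]
  congr with k
  simp only [smul_eq_mul, RCLike.inner_apply, conj_trivial]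
  push_cast
  ring_nf

end HardyExt

/-- A regularizing factor with quadratic decay in the upper half-plane (its only pole is at
`-i / ε`), which tends to `1` pointwise as `ε → 0`. -/
def mollifier (ε : ℝ) (ω : ℂ) : ℂ := ((1 - I * ε * ω) ^ 2)⁻¹

lemma one_add_sq_le_norm_one_sub_sq {ε : ℝ} (hε : 0 ≤ ε) {ω : ℂ} (hω : 0 ≤ ω.im) :
    1 + (ε * ‖ω‖) ^ 2 ≤ ‖(1 - I * ε * ω) ^ 2‖ := by
  rw [norm_pow, mul_pow, ← normSq_eq_norm_sq, ← normSq_eq_norm_sq, normSq_apply, normSq_apply]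
  simp only [sub_re, one_re, mul_re, I_re, ofReal_re, zero_mul, I_im, ofReal_im, mul_zero, sub_self,
    mul_im, one_mul, zero_add, zero_sub, sub_neg_eq_add, sub_im, one_im, mul_neg, neg_mul, neg_neg]
  nlinarith [mul_nonneg hε hω]

lemma norm_mollifier_le {ε : ℝ} (hε : 0 ≤ ε) {ω : ℂ} (hω : 0 ≤ ω.im) :
    ‖mollifier ε ω‖ ≤ (1 + (ε * ‖ω‖) ^ 2)⁻¹ := by
  rw [mollifier, norm_inv]
  exact inv_anti₀ (by positivity) (one_add_sq_le_norm_one_sub_sq hε hω)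

lemma hardyExt_mollifier {ε : ℝ} (hε : 0 ≤ ε) :
    HardyExt (fun k ↦ mollifier ε k) (mollifier ε) := by
  have hd : DifferentiableOn ℂ (mollifier ε) {ω : ℂ | 0 ≤ ω.im} := by
    refine DifferentiableOn.inv (by fun_prop) fun ω hω ↦ norm_pos_iff.mp ?_
    exact lt_of_lt_of_le (by positivity) (one_add_sq_le_norm_one_sub_sq hε hω)
  refine .of_continuousOn (hd.mono fun ω (hω : 0 < ω.im) ↦ hω.le) hd.continuousOn fun ω hω ↦ ?_
  exact (norm_mollifier_le hε hω).trans
    (inv_le_one_of_one_le₀ (le_add_of_nonneg_right (sq_nonneg _)))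

lemma hasQuadraticDecay_mollifier {ε : ℝ} (hε : 0 < ε) : HasQuadraticDecay (mollifier ε) := by
  refine ⟨1 + (ε ^ 2)⁻¹, fun ω hω ↦ (norm_mollifier_le hε.le hω).trans ?_⟩
  rw [inv_le_iff_one_le_mul₀ (by positivity), mul_assoc, inv_mul_eq_div, ← mul_div_assoc,
    one_le_div (by positivity)]
  have hexpand : (1 + (ε ^ 2)⁻¹) * (1 + (ε * ‖ω‖) ^ 2) =
      (1 + ‖ω‖ ^ 2) + ((ε * ‖ω‖) ^ 2 + (ε ^ 2)⁻¹) := by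
    field_simp
    ring
  rw [hexpand]
  exact le_add_of_nonneg_right (by positivity)

lemma tendsto_mollifier (ω : ℂ) : Tendsto (fun ε : ℝ ↦ mollifier ε ω) (𝓝 0) (𝓝 1) := by
  have hcont : ContinuousAt (fun ε : ℝ ↦ mollifier ε ω) 0 :=
    ContinuousAt.inv₀ (by fun_prop) (by simp)
  simpa [ContinuousAt, mollifier] using hcont

section Plancherel

variable {V E F : Type*} [NormedAddCommGroup V] [InnerProductSpace ℝ V] [FiniteDimensional ℝ V]
  [MeasurableSpace V] [BorelSpace V] [NormedAddCommGroup E] [NormedSpace ℂ E]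
  [NormedAddCommGroup F] [InnerProductSpace ℂ F]

lemma continuous_fourierInv {f : V → E} (hf : Integrable f) : Continuous (𝓕⁻ f) :=
  VectorFourier.fourierIntegral_continuous Real.continuous_fourierChar
    (L := -innerₗ V) (continuous_inner (𝕜 := ℝ).neg) hf

lemma integral_fourierInv_smul_eq [CompleteSpace E] {g : V → ℂ} {f : V → E} (hg : Integrable g)
    (hf : Integrable f) :
    ∫ x, 𝓕⁻ g x • f x = ∫ x, g x • 𝓕⁻ f x := by
  have hflip : (-innerₗ V).flip = -innerₗ V := by
    ext x y
    simp [real_inner_comm]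
  simpa [hflip] using! VectorFourier.integral_fourierIntegral_smul_eq_flip (L := -innerₗ V)
    Real.continuous_fourierChar (continuous_inner (𝕜 := ℝ).neg) hg hf

variable [CompleteSpace F] {f : V → F}

open scoped ContDiff SchwartzMap in
lemma coeFn_fourierInv_toLp (hf : Integrable f) (hf₂ : MemLp f 2) :
    (𝓕⁻ (hf₂.toLp f) : Lp F 2 (volume : Measure V)) =ᵐ[volume] 𝓕⁻ f := by
  set f' : Lp F 2 (volume : Measure V) := hf₂.toLp f with hf'
  refine ae_eq_of_integral_contDiff_smul_eq
    ((Lp.memLp (𝓕⁻ f')).locallyIntegrable (by norm_num))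
    (continuous_fourierInv hf).locallyIntegrable fun g hg hgs ↦ ?_
  have hgs' : HasCompactSupport fun x ↦ (g x : ℂ) := hgs.comp_left (g := ofReal) ofReal_zero
  let G : 𝓢(V, ℂ) := hgs'.toSchwartzMap (ofRealCLM.contDiff.comp hg)
  have hdual := DFunLike.congr_fun (Lp.fourierInv_toTemperedDistribution_eq f') G
  simp only [TemperedDistribution.fourierInv_apply, Lp.toTemperedDistribution_apply] at hdual
  calc ∫ x, g x • (𝓕⁻ f') x = ∫ x, G x • (𝓕⁻ f') x := rfl
    _ = ∫ x, 𝓕⁻ G x • f' x := hdual.symm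
    _ = ∫ x, 𝓕⁻ G x • f x :=
        integral_congr_ae (hf₂.coeFn_toLp.mono fun x hx ↦ by simp only [hf', hx])
    _ = ∫ x, G x • 𝓕⁻ f x := by
        rw [SchwartzMap.fourierInv_coe, integral_fourierInv_smul_eq G.integrable hf]
    _ = ∫ x, g x • 𝓕⁻ f x := rfl

lemma eLpNorm_fourier_Lp (f : Lp F 2 (volume : Measure V)) :
    eLpNorm (𝓕 f : Lp F 2 volume) 2 volume = eLpNorm f 2 volume := by
  rw [← Lp.enorm_def, ← Lp.enorm_def, ← ofReal_norm, ← ofReal_norm, Lp.norm_fourier_eq]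

lemma eLpNorm_fourierInv_eq (hf : Integrable f) (hf₂ : MemLp f 2) :
    eLpNorm (𝓕⁻ f) 2 = eLpNorm f 2 := by
  rw [← eLpNorm_congr_ae (coeFn_fourierInv_toLp hf hf₂), ← eLpNorm_fourier_Lp,
    FourierTransform.fourier_fourierInv_eq, eLpNorm_congr_ae hf₂.coeFn_toLp]

lemma eLpNorm_fourierInv_mul_le {m w : V → ℂ} (hm : MemLp m 2) (hm₁ : ∀ k, ‖m k‖ ≤ 1)
    (hw : MemLp w 2) : eLpNorm (𝓕⁻ fun k ↦ m k * w k) 2 ≤ eLpNorm w 2 := by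
  have hle : ∀ᵐ k, ‖m k * w k‖ ≤ ‖w k‖ := .of_forall fun k ↦ by
    rw [norm_mul]
    exact mul_le_of_le_one_left (norm_nonneg _) (hm₁ k)
  have hmw : Integrable fun k ↦ m k * w k := hm.integrable_mul hw
  have hmw₂ : MemLp (fun k ↦ m k * w k) 2 := hw.of_le hmw.1 hle
  rw [eLpNorm_fourierInv_eq hmw hmw₂]
  exact eLpNorm_mono_ae hle

lemma memLp_fourierInv (hf : Integrable f) (hf₂ : MemLp f 2) : MemLp (𝓕⁻ f) 2 :=
  ⟨(continuous_fourierInv hf).aestronglyMeasurable,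
    (eLpNorm_fourierInv_eq hf hf₂).trans_lt hf₂.2⟩

lemma integral_inner_fourier_eq (hf : Integrable f) (hf₂ : MemLp f 2)
    (g : Lp F 2 (volume : Measure V)) :
    ∫ k, inner ℂ (f k) ((𝓕 g : Lp F 2 volume) k) =
      ∫ x, inner ℂ (𝓕⁻ f x) (g x) := by
  set f' : Lp F 2 (volume : Measure V) := hf₂.toLp f with hf'
  calc ∫ k, inner ℂ (f k) ((𝓕 g : Lp F 2 volume) k) = inner ℂ f' (𝓕 g) :=
        integral_congr_ae (hf₂.coeFn_toLp.mono fun k hk ↦ by simp only [hf', hk])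
    _ = inner ℂ (𝓕⁻ f') g := by
        rw [← Lp.inner_fourier_eq (𝓕⁻ f'), FourierTransform.fourier_fourierInv_eq]
    _ = ∫ x, inner ℂ (𝓕⁻ f x) (g x) :=
        integral_congr_ae ((coeFn_fourierInv_toLp hf hf₂).mono fun x hx ↦ by simp only [hf', hx])

lemma fourierInv_mul_fourier_eq_integral {m : V → ℂ} (hm : Integrable m) (hm₂ : MemLp m 2)
    (f : Lp ℂ 2 (volume : Measure V)) (y : V) :
    𝓕⁻ (fun k ↦ m k * (𝓕 f : Lp ℂ 2 volume) k) y =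
      ∫ x, 𝓕⁻ m (y - x) * f x := by
  let p : V → ℂ := fun k ↦ exp ((-(2 * π * inner ℝ k y) : ℝ) * I) * conj (m k)
  have hpnorm (k : V) : ‖p k‖ = ‖m k‖ := by
    rw [norm_mul, norm_exp_ofReal_mul_I, one_mul, RCLike.norm_conj]
  have hpm : AEStronglyMeasurable p := .mul (by fun_prop) hm.1.star
  have hp : Integrable p := hm.mono hpm (.of_forall fun k ↦ (hpnorm k).le)
  have hp₂ : MemLp p 2 := hm₂.of_le hpm (.of_forall fun k ↦ (hpnorm k).le)
  have hpconj (x : V) : 𝓕⁻ p x = conj (𝓕⁻ m (y - x)) := by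
    rw [Real.fourierInv_eq', Real.fourierInv_eq', ← integral_conj]
    congr with k
    simp only [p, smul_eq_mul, map_mul, ← exp_conj, conj_ofReal, conj_I, ← mul_assoc, ← exp_add,
      inner_sub_right]
    push_cast
    ring_nf
  calc 𝓕⁻ (fun k ↦ m k * (𝓕 f : Lp ℂ 2 volume) k) y
      = ∫ k, inner ℂ (p k) ((𝓕 f : Lp ℂ 2 volume) k) := by
        rw [Real.fourierInv_eq']
        congr with k
        simp only [p, RCLike.inner_apply, map_mul, conj_conj, ← exp_conj, conj_ofReal, conj_I,
          smul_eq_mul]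
        push_cast
        ring_nf
    _ = ∫ x, inner ℂ (𝓕⁻ p x) (f x) := integral_inner_fourier_eq hp hp₂ f
    _ = ∫ x, 𝓕⁻ m (y - x) * f x := by
        simp only [hpconj, RCLike.inner_apply, conj_conj, mul_comm]

end Plancherel

section SquareIntegrable

variable {α E F : Type*} {_ : MeasurableSpace α} {μ : Measure α} [NormedAddCommGroup E]
  [NormedAddCommGroup F]

lemma memLp_two_of_norm_le {f : α → E} {C : ℝ} (hf : Integrable f μ) (hC : ∀ x, ‖f x‖ ≤ C) :
    MemLp f 2 μ := by
  refine (memLp_two_iff_integrable_sq_norm hf.1).mpr ?_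
  refine (hf.norm.const_mul C).mono' (hf.1.norm.pow 2) (.of_forall fun x ↦ ?_)
  rw [Real.norm_of_nonneg (by positivity), sq]
  exact mul_le_mul_of_nonneg_right (hC x) (norm_nonneg _)

lemma integral_norm_sq_le_of_eLpNorm_le {f : α → E} {g : α → F} (hf : AEStronglyMeasurable f μ)
    (hg : MemLp g 2 μ) (hfg : eLpNorm f 2 μ ≤ eLpNorm g 2 μ) :
    ∫ x, ‖f x‖ ^ 2 ∂μ ≤ ∫ x, ‖g x‖ ^ 2 ∂μ := by
  have hle : lpNorm f 2 μ ≤ lpNorm g 2 μ := by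
    rw [← toReal_eLpNorm hf, ← toReal_eLpNorm hg.1]
    exact ENNReal.toReal_mono hg.eLpNorm_ne_top hfg
  rw [lpNorm_eq_integral_norm_rpow_toReal two_ne_zero ENNReal.ofNat_ne_top hf,
    lpNorm_eq_integral_norm_rpow_toReal two_ne_zero ENNReal.ofNat_ne_top hg.1,
    Real.rpow_le_rpow_iff (by positivity) (by positivity) (by norm_num)] at hle
  simpa using hle

end SquareIntegrable

section Multiplier

variable {m : ℝ → ℂ} {mt : ℂ → ℂ}

namespace HardyExt

/-- The kernel `𝓕⁻ m` vanishes on `[0, ∞)`, so on `[a, ∞)` the output only sees `f` on `[a, ∞)`. -/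
lemma fourierInv_mul_fourier_eq_of_eqOn_Ici (h : HardyExt m mt) (hdecay : HasQuadraticDecay mt)
    {f f' : Lp ℂ 2 (volume : Measure ℝ)} {a : ℝ} (hff' : ∀ᵐ x, a ≤ x → f x = f' x) {y : ℝ}
    (hy : a ≤ y) :
    𝓕⁻ (fun k ↦ m k * (𝓕 f : Lp ℂ 2 volume) k) y =
      𝓕⁻ (fun k ↦ m k * (𝓕 f' : Lp ℂ 2 volume) k) y := by
  have hm := h.integrable_of_hasQuadraticDecay hdecay
  have hm₂ := memLp_two_of_norm_le hm h.norm_le_one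
  rw [fourierInv_mul_fourier_eq_integral hm hm₂, fourierInv_mul_fourier_eq_integral hm hm₂]
  refine integral_congr_ae (hff'.mono fun x hx ↦ ?_)
  rcases le_total a x with hax | hxa
  · simp only [hx hax]
  · simp only [h.fourierInv_eq_zero hdecay (sub_nonneg.mpr (hxa.trans hy)), zero_mul]

lemma eLpNorm_restrict_fourierInv_mul_fourier_le (h : HardyExt m mt)
    (hdecay : HasQuadraticDecay mt) (f : Lp ℂ 2 (volume : Measure ℝ)) (a : ℝ) :
    eLpNorm (𝓕⁻ fun k ↦ m k * (𝓕 f : Lp ℂ 2 volume) k) 2 (volume.restrict (Ici a)) ≤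
      eLpNorm f 2 (volume.restrict (Ici a)) := by
  obtain ⟨f', hf'⟩ : ∃ f' : Lp ℂ 2 (volume : Measure ℝ), f' =ᵐ[volume] (Ici a).indicator f :=
    ⟨_, ((Lp.memLp f).indicator measurableSet_Ici).coeFn_toLp⟩
  have hff' : ∀ᵐ x, a ≤ x → f x = f' x := by
    filter_upwards [hf'] with x hx hax
    rw [hx, indicator_of_mem (mem_Ici.mpr hax)]
  have hm₂ := memLp_two_of_norm_le (h.integrable_of_hasQuadraticDecay hdecay) h.norm_le_one
  have hlocal : eLpNorm (𝓕⁻ fun k ↦ m k * (𝓕 f : Lp ℂ 2 volume) k) 2 (volume.restrict (Ici a)) =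
      eLpNorm (𝓕⁻ fun k ↦ m k * (𝓕 f' : Lp ℂ 2 volume) k) 2 (volume.restrict (Ici a)) :=
    eLpNorm_congr_ae <| (ae_restrict_mem measurableSet_Ici).mono fun y hy ↦
      h.fourierInv_mul_fourier_eq_of_eqOn_Ici hdecay hff' hy
  have hcontr : eLpNorm (𝓕⁻ fun k ↦ m k * (𝓕 f' : Lp ℂ 2 volume) k) 2 ≤ eLpNorm f' 2 :=
    (eLpNorm_fourierInv_mul_le hm₂ h.norm_le_one (Lp.memLp (𝓕 f'))).trans_eq
      (eLpNorm_fourier_Lp f')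
  rw [hlocal, ← eLpNorm_indicator_eq_eLpNorm_restrict (f := f) measurableSet_Ici,
    ← eLpNorm_congr_ae hf']
  exact (eLpNorm_restrict_le _ _ _ _).trans hcontr

lemma eLpNorm_restrict_fourierInv_mul_le_of_hasQuadraticDecay (h : HardyExt m mt)
    (hdecay : HasQuadraticDecay mt) {w : ℝ → ℂ} (hw : Integrable w) (hw₂ : MemLp w 2) (a : ℝ) :
    eLpNorm (𝓕⁻ fun k ↦ m k * w k) 2 (volume.restrict (Ici a)) ≤
      eLpNorm (𝓕⁻ w) 2 (volume.restrict (Ici a)) := by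
  have hle := h.eLpNorm_restrict_fourierInv_mul_fourier_le hdecay (𝓕⁻ (hw₂.toLp w)) a
  rw [FourierTransform.fourier_fourierInv_eq,
    eLpNorm_congr_ae (ae_restrict_of_ae (coeFn_fourierInv_toLp hw hw₂))] at hle
  refine le_of_eq_of_le (congrArg (eLpNorm · 2 _) (funext fun y ↦ ?_)) hle
  rw [Real.fourierInv_eq_fourier_neg, Real.fourierInv_eq_fourier_neg]
  exact Real.fourier_congr_ae (hw₂.coeFn_toLp.symm.mono fun k hk ↦ by simp only [hk]) _

lemma integrable_mul (h : HardyExt m mt) {w : ℝ → ℂ} (hw : Integrable w) :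
    Integrable fun k ↦ m k * w k :=
  hw.bdd_mul h.aestronglyMeasurable (.of_forall h.norm_le_one)

lemma tendsto_fourierInv_mul_mollifier (h : HardyExt m mt) {w : ℝ → ℂ} (hw : Integrable w)
    (y : ℝ) :
    Tendsto (fun ε : ℝ ↦ 𝓕⁻ (fun k : ℝ ↦ m k * mollifier ε k * w k) y) (𝓝[>] 0)
      (𝓝 (𝓕⁻ (fun k ↦ m k * w k) y)) := by
  simp only [Real.fourierInv_eq]
  refine tendsto_integral_filter_of_dominated_convergence (fun k ↦ ‖w k‖) ?_ ?_ hw.norm ?_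
  · filter_upwards [self_mem_nhdsWithin] with ε hε
    have hint := (h.mul (hardyExt_mollifier (le_of_lt hε))).integrable_mul hw
    exact .smul (by fun_prop) hint.1
  · filter_upwards [self_mem_nhdsWithin] with ε hε
    refine .of_forall fun k ↦ ?_
    rw [Circle.norm_smul, norm_mul]
    exact mul_le_of_le_one_left (norm_nonneg _)
      ((h.mul (hardyExt_mollifier (le_of_lt hε))).norm_le_one k)
  · refine .of_forall fun k ↦ ?_
    have hlim := (tendsto_mollifier (k : ℂ)).mono_left (nhdsWithin_le_nhds (s := Ioi 0))
    simpa only [mul_one] using ((hlim.const_mul (m k)).mul_const (w k)).const_smul _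

theorem eLpNorm_restrict_fourierInv_mul_le (h : HardyExt m mt) {w : ℝ → ℂ} (hw : Integrable w)
    (hw₂ : MemLp w 2) (a : ℝ) :
    eLpNorm (𝓕⁻ fun k ↦ m k * w k) 2 (volume.restrict (Ici a)) ≤
      eLpNorm (𝓕⁻ w) 2 (volume.restrict (Ici a)) := by
  obtain ⟨ε, -, hε, hεlim⟩ := exists_seq_strictAnti_tendsto_nhdsWithin (0 : ℝ)
  have hmε (n : ℕ) := h.mul (hardyExt_mollifier (hε n).le)
  refine Lp.eLpNorm_le_of_ae_tendsto (u := atTop)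
    (f := fun n ↦ 𝓕⁻ fun k : ℝ ↦ m k * mollifier (ε n) k * w k) (.of_forall fun n ↦ ?_)
    (fun n ↦ ?_) (.of_forall fun y ↦ (h.tendsto_fourierInv_mul_mollifier hw y).comp hεlim)
  · exact (hmε n).eLpNorm_restrict_fourierInv_mul_le_of_hasQuadraticDecay
      (h.hasQuadraticDecay_mul (hasQuadraticDecay_mollifier (hε n))) hw hw₂ a
  · exact (continuous_fourierInv ((hmε n).integrable_mul hw)).aestronglyMeasurable

end HardyExt

end Multiplier

section Scattering

/-- The Fourier transform in the angular frequency `k = 2πξ`, without the factor `(2π)^{-1/2}`. -/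
def angularFourier (ψ : ℝ → ℂ) (k : ℝ) : ℂ := ∫ y : ℝ, exp (-(I * k * y)) * ψ y

/-- The angular spectrum of the free evolution `e^{-itH₀}ψ`, without the factor `(2π)^{-1/2}`. -/
def freeSpectrum (ψ : ℝ → ℂ) (t k : ℝ) : ℂ := exp (-(I * t * k ^ 2)) * angularFourier ψ k

variable {ψ : ℝ → ℂ}

lemma norm_exp_neg_I_mul (k y : ℝ) : ‖exp (-(I * k * y))‖ = 1 := by
  simp [norm_exp]

lemma integrable_exp_neg_I_mul (hψ : Integrable ψ) (k : ℝ) :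
    Integrable fun y : ℝ ↦ exp (-(I * k * y)) * ψ y :=
  hψ.bdd_mul (c := 1) (by fun_prop) (.of_forall fun y ↦ (norm_exp_neg_I_mul k y).le)

lemma angularFourier_two_pi_mul (ψ : ℝ → ℂ) (ξ : ℝ) : angularFourier ψ (2 * π * ξ) = 𝓕 ψ ξ := by
  rw [angularFourier, Real.fourier_real_eq_integral_exp_smul]
  congr with y
  rw [smul_eq_mul]
  push_cast
  ring_nf

lemma integrable_angularFourier (hψ : Integrable (𝓕 ψ)) : Integrable (angularFourier ψ) := by
  rw [← integrable_comp_mul_left_iff _ Real.two_pi_pos.ne']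
  simpa only [angularFourier_two_pi_mul] using hψ

lemma norm_freeSpectrum (ψ : ℝ → ℂ) (t k : ℝ) : ‖freeSpectrum ψ t k‖ = ‖angularFourier ψ k‖ := by
  have hphase := norm_exp_neg_I_mul t (k ^ 2)
  rw [ofReal_pow] at hphase
  rw [freeSpectrum, norm_mul, hphase, one_mul]

lemma norm_freeSpectrum_le (ψ : ℝ → ℂ) (t k : ℝ) : ‖freeSpectrum ψ t k‖ ≤ ∫ y, ‖ψ y‖ := by
  rw [norm_freeSpectrum, angularFourier]
  refine (norm_integral_le_integral_norm _).trans_eq ?_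
  simp only [norm_mul, norm_exp_neg_I_mul, one_mul]

lemma integrable_freeSpectrum (hψ : Integrable (𝓕 ψ)) (t : ℝ) : Integrable (freeSpectrum ψ t) :=
  (integrable_angularFourier hψ).mono (.mul (by fun_prop) (integrable_angularFourier hψ).1)
    (.of_forall fun k ↦ (norm_freeSpectrum ψ t k).le)

lemma inv_sqrt_two_pi_mul_integral_eq_fourierInv (w : ℝ → ℂ) (x : ℝ) :
    (√(2 * π) : ℂ)⁻¹ * ∫ k : ℝ, (√(2 * π) : ℂ)⁻¹ * (exp (I * k * x) * w k) =
      𝓕⁻ (fun ξ ↦ w (2 * π * ξ)) x := by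
  have hscale := Measure.integral_comp_mul_left (fun k : ℝ ↦ exp (I * k * x) * w k) (2 * π)
  rw [integral_const_mul, ← mul_assoc, ← mul_inv, ← ofReal_mul,
    Real.mul_self_sqrt Real.two_pi_pos.le, ← ofReal_inv, ← real_smul,
    ← abs_of_pos (inv_pos.mpr Real.two_pi_pos), ← hscale, Real.fourierInv_eq']
  congr with ξ
  simp only [smul_eq_mul, RCLike.inner_apply, conj_trivial]
  push_cast
  ring_nf

lemma integral_conj_mul_eq_angularFourier {x₀ k : ℝ} {α β : ℂ} {φ : ℝ → ℂ}
    (hψ : Integrable ψ) (hsupp : ∀ y, x₀ < y → ψ y = 0)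
    (hφ : ∀ y : ℝ, y ≤ x₀ → φ y = α * exp (-(I * k * y)) + β * exp (I * k * y)) :
    ∫ y, conj (φ y) * ψ y = conj α * angularFourier ψ (-k) + conj β * angularFourier ψ k := by
  rw [angularFourier, angularFourier, ← integral_const_mul, ← integral_const_mul,
    ← integral_add ((integrable_exp_neg_I_mul hψ _).const_mul _)
      ((integrable_exp_neg_I_mul hψ _).const_mul _)]
  congr with y
  rcases le_or_gt y x₀ with hy | hy
  · simp only [hφ y hy, map_add, map_mul, ← exp_conj, map_neg, conj_I, conj_ofReal, ofReal_neg]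
    ring_nf
  · simp only [hsupp y hy, mul_zero, add_zero]

lemma integral_half_mul_add_comp_neg {A : ℝ → ℂ} (hA : Integrable A) :
    ∫ k, (1 / 2 : ℂ) * (A k + A (-k)) = ∫ k, A k := by
  rw [integral_const_mul, integral_add hA hA.comp_neg, integral_neg_eq_self A volume]
  ring

lemma conj_mul_add_conj_mul_eq_zero_of_mem_unitaryGroup {T Rl Rr : ℂ}
    (h : Matrix.of ![![T, Rl], ![Rr, T]] ∈ Matrix.unitaryGroup (Fin 2) ℂ) :
    conj Rl * T + conj T * Rr = 0 := by
  have hentry := congrFun₂ (Matrix.mem_unitaryGroup_iff.mp h) 1 0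
  simp only [Matrix.mul_apply, Fin.sum_univ_two, Matrix.star_apply, Matrix.of_apply,
    Matrix.cons_val', Matrix.cons_val_fin_one, Matrix.cons_val_one, Matrix.cons_val_zero,
    RCLike.star_def, ne_eq, one_ne_zero, not_false_eq_true, Matrix.one_apply_ne] at hentry
  linear_combination hentry

/-- By orthogonality the two reflected contributions cancel; what remains is the even part of
`k ↦ e^{ikx} T(k)` times the free spectrum. -/
lemma integral_superposition_eq_fourierInv {T Rl Rr : ℝ → ℂ}
    (hTsymm : ∀ k, T (-k) = conj (T k)) (horth : ∀ k, conj (Rl k) * T k + conj (T k) * Rr k = 0)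
    {t : ℝ} (hT : Integrable fun k ↦ T k * freeSpectrum ψ t k) (x : ℝ) :
    (√(2 * π) : ℂ)⁻¹ * ∫ k : ℝ, (1 / 2 : ℂ) *
        ((√(2 * π) : ℂ)⁻¹ * (conj (Rl k) * angularFourier ψ (-k) + angularFourier ψ k) *
            (T k * exp (I * k * x)) +
          (√(2 * π) : ℂ)⁻¹ * (conj (T k) * angularFourier ψ (-k)) *
            (Rr k * exp (I * k * x) + exp (-(I * k * x)))) *
        exp (-(I * t * k ^ 2)) =
      𝓕⁻ (fun ξ ↦ T (2 * π * ξ) * freeSpectrum ψ t (2 * π * ξ)) x := by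
  let A : ℝ → ℂ := fun k ↦ exp (I * k * x) * (T k * freeSpectrum ψ t k)
  have hA : Integrable A :=
    hT.bdd_mul (c := 1) (by fun_prop) (.of_forall fun k ↦ by simp [norm_exp])
  have hAneg (k : ℝ) : A (-k) =
      exp (-(I * k * x)) * (conj (T k) * (exp (-(I * t * k ^ 2)) * angularFourier ψ (-k))) := by
    simp only [A, hTsymm, freeSpectrum]
    push_cast
    ring_nf
  rw [← inv_sqrt_two_pi_mul_integral_eq_fourierInv (fun k ↦ T k * freeSpectrum ψ t k),
    integral_const_mul _ A, ← integral_half_mul_add_comp_neg hA,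
    ← integral_const_mul _ fun k ↦ (1 / 2 : ℂ) * (A k + A (-k))]
  congr with k
  rw [hAneg]
  simp only [A, freeSpectrum]
  linear_combination ((√(2 * π) : ℂ)⁻¹ * (1 / 2) * angularFourier ψ (-k) * exp (I * k * x) *
    exp (-(I * t * k ^ 2))) * horth k

end Scattering

theorem statement14_general {x₀ x₁ : ℝ} {T Rl Rr : ℝ → ℂ}
    (hTsymm : ∀ k, T (-k) = conj (T k))
    (horth : ∀ k, conj (Rl k) * T k + conj (T k) * Rr k = 0)
    {Tt : ℂ → ℂ} (hTt : HardyExt T Tt) {φ₁ φ₂ : ℝ → ℝ → ℂ}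
    (hφ₁l : ∀ k x : ℝ, x ≤ x₀ → φ₁ x k = Rl k * exp (-(I * k * x)) + exp (I * k * x))
    (hφ₁r : ∀ k x : ℝ, x₁ ≤ x → φ₁ x k = T k * exp (I * k * x))
    (hφ₂l : ∀ k x : ℝ, x ≤ x₀ → φ₂ x k = T k * exp (-(I * k * x)))
    (hφ₂r : ∀ k x : ℝ, x₁ ≤ x → φ₂ x k = Rr k * exp (I * k * x) + exp (-(I * k * x)))
    {ψ₀ : ℝ → ℂ} (hψ₀ : Integrable ψ₀) (hFψ₀ : Integrable (𝓕 ψ₀))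
    (hsupp : ∀ x, x₀ < x → ψ₀ x = 0) {t : ℝ} {c₁ c₂ : ℝ → ℂ}
    (hc₁ : ∀ k, c₁ k = (√(2 * π) : ℂ)⁻¹ * ∫ y, conj (φ₁ y k) * ψ₀ y)
    (hc₂ : ∀ k, c₂ k = (√(2 * π) : ℂ)⁻¹ * ∫ y, conj (φ₂ y k) * ψ₀ y)
    {u : ℝ → ℂ}
    (hu : ∀ x, u x = (√(2 * π) : ℂ)⁻¹ *
      ∫ k : ℝ, (1 / 2 : ℂ) * (c₁ k * φ₁ x k + c₂ k * φ₂ x k) * exp (-(I * t * k ^ 2)))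
    {v : ℝ → ℂ}
    (hv : ∀ x : ℝ, v x = (√(2 * π) : ℂ)⁻¹ *
      ∫ k : ℝ, exp (I * k * x) * exp (-(I * t * k ^ 2)) *
        ((√(2 * π) : ℂ)⁻¹ * ∫ y : ℝ, exp (-(I * k * y)) * ψ₀ y))
    {a : ℝ} (ha : x₁ ≤ a) :
    ∫ x in Ici a, ‖u x‖ ^ 2 ≤ ∫ x in Ici a, ‖v x‖ ^ 2 := by
  set w : ℝ → ℂ := fun ξ ↦ freeSpectrum ψ₀ t (2 * π * ξ)
  have hw : Integrable w := (integrable_freeSpectrum hFψ₀ t).comp_mul_left' Real.two_pi_pos.ne'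
  have hw₂ : MemLp w 2 := memLp_two_of_norm_le hw fun ξ ↦ norm_freeSpectrum_le ψ₀ t _
  have hTw : HardyExt (fun ξ ↦ T (2 * π * ξ)) (fun ω ↦ Tt ((2 * π : ℝ) * ω)) :=
    hTt.comp_mul_left Real.two_pi_pos
  have hc₁' (k : ℝ) : c₁ k = (√(2 * π) : ℂ)⁻¹ *
      (conj (Rl k) * angularFourier ψ₀ (-k) + angularFourier ψ₀ k) := by
    have hφ (y : ℝ) (hy : y ≤ x₀) :
        φ₁ y k = Rl k * exp (-(I * k * y)) + 1 * exp (I * k * y) := by rw [hφ₁l k y hy, one_mul]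
    rw [hc₁, integral_conj_mul_eq_angularFourier hψ₀ hsupp hφ, map_one, one_mul]
  have hc₂' (k : ℝ) : c₂ k = (√(2 * π) : ℂ)⁻¹ * (conj (T k) * angularFourier ψ₀ (-k)) := by
    have hφ (y : ℝ) (hy : y ≤ x₀) :
        φ₂ y k = T k * exp (-(I * k * y)) + 0 * exp (I * k * y) := by
      rw [hφ₂l k y hy, zero_mul, add_zero]
    rw [hc₂, integral_conj_mul_eq_angularFourier hψ₀ hsupp hφ, map_zero, zero_mul, add_zero]
  have hu_eq : ∀ x ∈ Ici a, u x = 𝓕⁻ (fun ξ ↦ T (2 * π * ξ) * w ξ) x := fun x hx ↦ by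
    rw [hu, ← integral_superposition_eq_fourierInv hTsymm horth
      (hTt.integrable_mul (integrable_freeSpectrum hFψ₀ t))]
    congr with k
    rw [hc₁', hc₂', hφ₁r k x (ha.trans hx), hφ₂r k x (ha.trans hx)]
  have hv_eq : v = 𝓕⁻ w := funext fun x ↦ by
    rw [hv, ← inv_sqrt_two_pi_mul_integral_eq_fourierInv]
    congr with k
    rw [freeSpectrum, angularFourier]
    ring
  rw [setIntegral_congr_fun measurableSet_Ici fun x hx ↦ by rw [hu_eq x hx], hv_eq]
  exact integral_norm_sq_le_of_eLpNorm_le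
    (continuous_fourierInv (hTw.integrable_mul hw)).aestronglyMeasurable
    ((memLp_fourierInv hw hw₂).restrict _)
    (hTw.eLpNorm_restrict_fourierInv_mul_le hw hw₂ a)

/-- In the setting of the eigenfunction expansion (Schwartz initial state
`ψ₀` supported in `(−∞, x₀]`, unitary scattering matrix with conjugation symmetries, and a
transmission amplitude `T` with a bounded analytic extension to the upper half-plane having
boundary values `T` a.e.), the tunneled wave `u` satisfies, for every `a ≥ x₁`,
`∫_{[a,∞)} |u(x)|² dx ≤ ∫_{[a,∞)} |(e^{-itH₀}ψ₀)(x)|² dx`, where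
`(e^{-itH₀}ψ₀)(x) = (2π)^{-1/2} ∫ e^{ikx} e^{-itk²} (Fψ₀)(k) dk`. -/
theorem statement14 (x₀ x₁ : ℝ) (hx : x₀ < x₁)
    (T Rl Rr : ℝ → ℂ) (hTm : Measurable T) (hRlm : Measurable Rl) (hRrm : Measurable Rr)
    (hTsymm : ∀ k : ℝ, T (-k) = starRingEnd ℂ (T k))
    (hRlsymm : ∀ k : ℝ, Rl (-k) = starRingEnd ℂ (Rl k))
    (hRrsymm : ∀ k : ℝ, Rr (-k) = starRingEnd ℂ (Rr k))
    (hunit : ∀ k : ℝ,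
      Matrix.of ![![T k, Rl k], ![Rr k, T k]] ∈ Matrix.unitaryGroup (Fin 2) ℂ)
    (Tt : ℂ → ℂ) (hTt : HardyExt T Tt)
    (φ₁ φ₂ : ℝ → ℝ → ℂ)
    (hφ₁l : ∀ k : ℝ, ∀ x : ℝ, x ≤ x₀ →
      φ₁ x k = Rl k * Complex.exp (-(Complex.I * k * x)) + Complex.exp (Complex.I * k * x))
    (hφ₁r : ∀ k : ℝ, ∀ x : ℝ, x₁ ≤ x → φ₁ x k = T k * Complex.exp (Complex.I * k * x))
    (hφ₂l : ∀ k : ℝ, ∀ x : ℝ, x ≤ x₀ → φ₂ x k = T k * Complex.exp (-(Complex.I * k * x)))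
    (hφ₂r : ∀ k : ℝ, ∀ x : ℝ, x₁ ≤ x →
      φ₂ x k = Rr k * Complex.exp (Complex.I * k * x) + Complex.exp (-(Complex.I * k * x)))
    (ψ₀ : SchwartzMap ℝ ℂ) (hsupp : ∀ x : ℝ, x₀ < x → ψ₀ x = 0)
    (t : ℝ) (c₁ c₂ : ℝ → ℂ)
    (hc₁ : ∀ k : ℝ, c₁ k = (Real.sqrt (2 * Real.pi) : ℂ)⁻¹ *
      ∫ y : ℝ, starRingEnd ℂ (φ₁ y k) * ψ₀ y)
    (hc₂ : ∀ k : ℝ, c₂ k = (Real.sqrt (2 * Real.pi) : ℂ)⁻¹ *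
      ∫ y : ℝ, starRingEnd ℂ (φ₂ y k) * ψ₀ y)
    (u : ℝ → ℂ)
    (hu : ∀ x : ℝ, u x = (Real.sqrt (2 * Real.pi) : ℂ)⁻¹ *
      ∫ k : ℝ, (1 / 2 : ℂ) * (c₁ k * φ₁ x k + c₂ k * φ₂ x k) *
        Complex.exp (-(Complex.I * t * k ^ 2)))
    (v : ℝ → ℂ)
    (hv : ∀ x : ℝ, v x = (Real.sqrt (2 * Real.pi) : ℂ)⁻¹ *
      ∫ k : ℝ, Complex.exp (Complex.I * k * x) * Complex.exp (-(Complex.I * t * k ^ 2)) *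
        ((Real.sqrt (2 * Real.pi) : ℂ)⁻¹ *
          ∫ y : ℝ, Complex.exp (-(Complex.I * k * y)) * ψ₀ y))
    (a : ℝ) (ha : x₁ ≤ a) :
    ∫ x in Set.Ici a, ‖u x‖ ^ 2 ≤ ∫ x in Set.Ici a, ‖v x‖ ^ 2 := by
  exact statement14_general hTsymm
    (fun k ↦ conj_mul_add_conj_mul_eq_zero_of_mem_unitaryGroup (hunit k)) hTt hφ₁l hφ₁r hφ₂l hφ₂r
    ψ₀.integrable (SchwartzMap.fourier_coe ψ₀ ▸ (𝓕 ψ₀).integrable) hsupp hc₁ hc₂ hu hv ha
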